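/- Let d ≥ 2, let A : ℝ^d → ℝ^d be smooth, let R > 0, let D_R be the open ball of radius R centred at the origin, and define μ(R) as the infimum, over all smooth g : ℝ^d → ℂ that are not identically zero on D_R, of the quotient (∫_{D_R} |∇g(x) − iA(x)g(x)|² |x|^{−(d−2)} dx) / (∫_{D_R} |g(x)|² |x|^{−(d−2)} dx). Then for every ψ ∈ C_c^∞(ℝ^d, ℂ) one has ∫_{ℝ^d} |∇ψ(x) − iA(x)ψ(x)|² dx − ((d−2)/2)² ∫_{ℝ^d} |ψ(x)|²/|x|² dx ≥ μ(R) ∫_{D_R} |ψ(x)|² dx. -/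

import Mathlib

open MeasureTheory Real

/-- The magnetic energy density `|∇g(x) − iA(x)g(x)|²`. -/
noncomputable def magEnergy (d : ℕ)
    (A : EuclideanSpace ℝ (Fin d) → EuclideanSpace ℝ (Fin d))
    (g : EuclideanSpace ℝ (Fin d) → ℂ) (x : EuclideanSpace ℝ (Fin d)) : ℝ :=
  ∑ j, ‖fderiv ℝ g x (EuclideanSpace.single j (1:ℝ)) - Complex.I * (A x j : ℝ) * g x‖ ^ 2

/-- The lowest magnetic Neumann-type Rayleigh quotient on the ball of radius `R`
with weight `|x|^{-(d-2)}`. -/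
noncomputable def muB (d : ℕ)
    (A : EuclideanSpace ℝ (Fin d) → EuclideanSpace ℝ (Fin d)) (R : ℝ) : ℝ :=
  sInf {q : ℝ | ∃ g : EuclideanSpace ℝ (Fin d) → ℂ, ContDiff ℝ (⊤ : ℕ∞) g ∧
    (∃ x ∈ Metric.ball (0 : EuclideanSpace ℝ (Fin d)) R, g x ≠ 0) ∧
    q = (∫ x in Metric.ball (0 : EuclideanSpace ℝ (Fin d)) R,
          magEnergy d A g x * ‖x‖ ^ (-((d:ℝ) - 2)))
        / ∫ x in Metric.ball (0 : EuclideanSpace ℝ (Fin d)) R,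
            ‖g x‖^2 * ‖x‖ ^ (-((d:ℝ) - 2))}

/-!
Put `α = (d - 2) / 2` and `φ = |x|^{-α} g`. Expanding `|(∇ - iA)g|² |x|^{-2α}` produces the magnetic
energy density of `φ`, a multiple of `|φ|² / |x|²`, and the cross term `α |x|⁻² D(|φ|²)(x)[x]`, in
which `A` has dropped out because `-iAφ` is orthogonal to `φ`. Euler's identity
`∫ |x|^p Df(x)[x] = -(d + p) ∫ |x|^p f` evaluates the cross term, so that the magnetic energy of `φ`
minus the Hardy term is exactly the weighted energy of `g`, which the Rayleigh quotient bounds below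
already on the ball.

The substitution keeps `g` smooth only if `φ` vanishes near the origin. For `d = 2` it is not
needed, as `α = 0`. For `d ≥ 3` a general `ψ` is multiplied by cutoffs `χ_t` with `χ_t → 1` and
`|∇χ_t| ≤ C / |x|`, and dominated convergence applies because `|ψ|² / |x|²` is integrable.
-/

open Filter Topology Module
open scoped Gradient

section PowerWeights

variable {E F : Type*} [NormedAddCommGroup F] [NormedSpace ℝ F]

lemma contDiff_of_tsupport [NormedAddCommGroup E] [NormedSpace ℝ E] {n : WithTop ℕ∞} {f : E → F}
    (hf : ∀ x ∈ tsupport f, ContDiffAt ℝ n f x) : ContDiff ℝ n f :=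
  contMDiff_iff_contDiff.1 (contMDiff_of_tsupport fun x hx => (hf x hx).contMDiffAt)

lemma tsupport_norm_sq_subset {X V : Type*} [TopologicalSpace X] [NormedAddCommGroup V]
    {f : X → V} : tsupport (fun x => ‖f x‖ ^ 2) ⊆ tsupport f :=
  tsupport_comp_subset (g := fun z => ‖z‖ ^ 2) (by simp) f

lemma hasCompactSupport_norm_sq {X V : Type*} [TopologicalSpace X] [NormedAddCommGroup V]
    {f : X → V} (hc : HasCompactSupport f) : HasCompactSupport fun x => ‖f x‖ ^ 2 :=
  hc.of_isClosed_subset (isClosed_tsupport _) tsupport_norm_sq_subset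

lemma integral_fderiv_apply_self [NormedAddCommGroup E] [NormedSpace ℝ E] [FiniteDimensional ℝ E]
    [MeasurableSpace E] [BorelSpace E] {μ : Measure E} [μ.IsAddHaarMeasure] {f : E → F}
    (hf : ContDiff ℝ 1 f) (hc : HasCompactSupport f) :
    ∫ x, fderiv ℝ f x x ∂μ = -((finrank ℝ E : ℝ) • ∫ x, f x ∂μ) := by
  let b := finBasis ℝ E
  let coord i : E →L[ℝ] ℝ := (b.coord i).toContinuousLinearMap
  have hexpand (x : E) : fderiv ℝ f x x = ∑ i, coord i x • fderiv ℝ f x (b i) := by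
    conv_lhs => rw [← b.sum_repr x, map_sum]
    simp [coord]
  have hderiv (i : Fin (finrank ℝ E)) (x : E) : fderiv ℝ (coord i) x (b i) = 1 := by
    rw [(coord i).fderiv]
    simp [coord]
  have hint : Integrable f μ := hf.continuous.integrable_of_hasCompactSupport hc
  have hint_coord (i : Fin (finrank ℝ E)) :
      Integrable (fun x => coord i x • fderiv ℝ f x (b i)) μ :=
    ((coord i).continuous.smul ((hf.continuous_fderiv one_ne_zero).clm_apply
      continuous_const)).integrable_of_hasCompactSupport (hc.fderiv_apply ℝ _).smul_left
  have hparts (i : Fin (finrank ℝ E)) :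
      ∫ x, coord i x • fderiv ℝ f x (b i) ∂μ = -∫ x, f x ∂μ := by
    rw [integral_smul_fderiv_eq_neg_fderiv_smul_of_integrable (by simpa only [hderiv, one_smul])
      (hint_coord i) (((coord i).continuous.smul hf.continuous).integrable_of_hasCompactSupport
        hc.smul_left) (fun x _ => (coord i).differentiableAt)
      (fun x _ => hf.differentiable one_ne_zero x)]
    simp only [hderiv, one_smul]
  simp only [hexpand]
  rw [integral_finsetSum _ fun i _ => hint_coord i]
  simp [hparts, Nat.cast_smul_eq_nsmul]

lemma integrable_norm_rpow_smul [NormedAddCommGroup E] [NormedSpace ℝ E] [FiniteDimensional ℝ E]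
    [MeasurableSpace E] [BorelSpace E] {μ : Measure E} [μ.IsAddHaarMeasure] {f : E → F} {p : ℝ}
    (hE : 1 ≤ finrank ℝ E) (hp : -(finrank ℝ E : ℝ) < p) (hf : Continuous f)
    (hc : HasCompactSupport f) :
    Integrable (fun x => ‖x‖ ^ p • f x) μ := by
  have hloc : LocallyIntegrable (fun x : E => ‖x‖ ^ p) μ :=
    locallyIntegrable_of_norm_le_rpow hE (neg_lt.1 hp) (C := 1)
      (Eventually.of_forall fun x => by simp [abs_of_nonneg, Real.rpow_nonneg])
      (measurable_norm.pow_const p).aestronglyMeasurable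
  exact hloc.integrable_smul_right_of_hasCompactSupport hf hc

variable [NormedAddCommGroup E] [InnerProductSpace ℝ E]

lemma contDiff_norm_rpow_smul {n : WithTop ℕ∞} {f : E → F} (hf : ContDiff ℝ n f)
    (h0 : 0 ∉ tsupport f) (p : ℝ) : ContDiff ℝ n fun x => ‖x‖ ^ p • f x :=
  contDiff_of_tsupport fun _ hx =>
    have hx0 := ne_of_mem_of_not_mem (tsupport_smul_subset_right _ _ hx) h0
    ((contDiffAt_norm ℝ hx0).rpow_const_of_ne (norm_ne_zero_iff.2 hx0)).smul hf.contDiffAt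

lemma hasGradientAt_norm_rpow [CompleteSpace E] {x : E} (hx : x ≠ 0) (p : ℝ) :
    HasGradientAt (fun y => ‖y‖ ^ p) ((p * ‖x‖ ^ (p - 2)) • x) x := by
  have hpow (y : E) (q : ℝ) : ‖y‖ ^ q = (‖y‖ ^ 2) ^ (q / 2) := by
    rw [← Real.rpow_natCast_mul (norm_nonneg y)]
    congr 1
    push_cast
    ring
  have h := (hasStrictFDerivAt_norm_sq x).hasFDerivAt.rpow_const (p := p / 2)
    (Or.inl (pow_ne_zero 2 (norm_ne_zero_iff.2 hx)))
  rw [hasGradientAt_iff_hasFDerivAt]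
  simp only [hpow]
  convert! h using 1
  ext v
  simp only [sub_div, div_self (two_ne_zero (α := ℝ)), map_smul, smul_apply,
    InnerProductSpace.toDual_apply_apply, smul_eq_mul, coe_innerSL_apply, nsmul_eq_mul,
    Nat.cast_ofNat]
  ring

variable [MeasurableSpace E] [BorelSpace E] {μ : Measure E}

lemma integrable_norm_rpow_smul_of_notMem_tsupport [IsFiniteMeasureOnCompacts μ] {f : E → F}
    (hf : Continuous f) (hc : HasCompactSupport f) (h0 : 0 ∉ tsupport f) (p : ℝ) :
    Integrable (fun x => ‖x‖ ^ p • f x) μ :=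
  (contDiff_norm_rpow_smul (contDiff_zero.2 hf) h0 p).continuous.integrable_of_hasCompactSupport
    hc.smul_left

lemma integrable_norm_rpow_smul_fderiv_apply_self [IsFiniteMeasureOnCompacts μ] {f : E → F}
    (hf : ContDiff ℝ 1 f) (hc : HasCompactSupport f) (h0 : 0 ∉ tsupport f) (p : ℝ) :
    Integrable (fun x => ‖x‖ ^ p • fderiv ℝ f x x) μ := by
  have hsubset : tsupport (fun x => fderiv ℝ f x x) ⊆ tsupport f :=
    closure_minimal (fun x hx => support_fderiv_subset ℝ fun h => hx (by simp [h]))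
      (isClosed_tsupport f)
  exact integrable_norm_rpow_smul_of_notMem_tsupport
    ((hf.continuous_fderiv one_ne_zero).clm_apply continuous_id)
    (hc.of_isClosed_subset (isClosed_tsupport _) hsubset) (fun h => h0 (hsubset h)) p

variable [FiniteDimensional ℝ E] [μ.IsAddHaarMeasure]

lemma integral_norm_rpow_smul_fderiv_apply_self {f : E → F}
    (hf : ContDiff ℝ 1 f) (hc : HasCompactSupport f) (h0 : 0 ∉ tsupport f) (p : ℝ) :
    ∫ x, ‖x‖ ^ p • fderiv ℝ f x x ∂μ = -((finrank ℝ E + p) • ∫ x, ‖x‖ ^ p • f x ∂μ) := by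
  have hradial (x : E) : fderiv ℝ (fun y => ‖y‖ ^ p • f y) x x =
      ‖x‖ ^ p • fderiv ℝ f x x + p • ‖x‖ ^ p • f x := by
    rcases eq_or_ne x 0 with rfl | hx
    · simp [image_eq_zero_of_notMem_tsupport h0]
    · have hx' : 0 < ‖x‖ := norm_pos_iff.2 hx
      rw [((hasGradientAt_norm_rpow hx p).hasFDerivAt.fun_smul
        (hf.differentiable one_ne_zero x).hasFDerivAt).fderiv]
      simp [mul_assoc, smul_smul, Real.rpow_sub hx', hx]
  have hint := integrable_norm_rpow_smul_of_notMem_tsupport (μ := μ) hf.continuous hc h0 p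
  have hint_fderiv := integrable_norm_rpow_smul_fderiv_apply_self (μ := μ) hf hc h0 p
  have heuler := integral_fderiv_apply_self (μ := μ) (contDiff_norm_rpow_smul hf h0 p)
    hc.smul_left
  simp_rw [hradial] at heuler
  rw [integral_add hint_fderiv (hint.fun_smul p), integral_smul] at heuler
  rw [eq_sub_of_add_eq heuler]
  module

end PowerWeights

section MagneticDerivative

variable {E : Type*} [NormedAddCommGroup E] [InnerProductSpace ℝ E]

/-- The magnetic derivative `(∇ - iA)g` of `g` at `x` in the direction `v`; the squares of its norms
along the standard basis add up to `magEnergy`. -/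
noncomputable def magDeriv (A : E → E) (g : E → ℂ) (x v : E) : ℂ :=
  fderiv ℝ g x v - Complex.I * (inner ℝ (A x) v : ℝ) * g x

variable {A : E → E} {g : E → ℂ} {x : E}

lemma magDeriv_smul [CompleteSpace E] {χ : E → ℝ} {χ' : E} (hχ : HasGradientAt χ χ' x)
    (hg : DifferentiableAt ℝ g x) (v : E) :
    magDeriv A (fun y => χ y • g y) x v = χ x • magDeriv A g x v + inner ℝ χ' v • g x := by
  rw [magDeriv, (hχ.hasFDerivAt.fun_smul hg.hasFDerivAt).fderiv]
  simp only [magDeriv, add_apply, smul_apply, Complex.real_smul,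
    ContinuousLinearMap.smulRight_apply, InnerProductSpace.toDual_apply_apply]
  ring

-- The term `-iAg` is orthogonal to `g`, so the vector potential does not contribute.
lemma two_mul_inner_magDeriv_self (hg : DifferentiableAt ℝ g x) (v : E) :
    2 * inner ℝ (magDeriv A g x v) (g x) = fderiv ℝ (fun y => ‖g y‖ ^ 2) x v := by
  have horth : inner ℝ (Complex.I * (inner ℝ (A x) v : ℝ) * g x) (g x) = 0 := by
    rw [mul_right_comm, mul_comm, ← Complex.real_smul, real_inner_smul_left]
    exact mul_eq_zero_of_right _
      ((real_inner_comm _ _).trans (real_inner_I_smul_self ℂ (g x)))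
  rw [hg.hasFDerivAt.norm_sq.fderiv, magDeriv, inner_sub_left, horth, sub_zero]
  simp [real_inner_comm, mul_add]

end MagneticDerivative

section MagneticEnergy

variable {d : ℕ} {A : EuclideanSpace ℝ (Fin d) → EuclideanSpace ℝ (Fin d)}
  {g : EuclideanSpace ℝ (Fin d) → ℂ} {x : EuclideanSpace ℝ (Fin d)}

lemma magEnergy_eq_sum_magDeriv :
    magEnergy d A g x = ∑ j, ‖magDeriv A g x (EuclideanSpace.single j 1)‖ ^ 2 := by
  simp [magEnergy, magDeriv, EuclideanSpace.inner_single_right]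

lemma magEnergy_nonneg : 0 ≤ magEnergy d A g x :=
  Finset.sum_nonneg fun _ _ => sq_nonneg _

lemma magEnergy_congr {f : EuclideanSpace ℝ (Fin d) → ℂ} (h : f =ᶠ[𝓝 x] g) :
    magEnergy d A f x = magEnergy d A g x := by
  simp only [magEnergy, h.fderiv_eq, h.eq_of_nhds]

lemma tsupport_magEnergy_subset : tsupport (magEnergy d A g) ⊆ tsupport g := by
  refine closure_minimal (fun x hx => ?_) (isClosed_tsupport g)
  contrapose! hx
  rw [Function.notMem_support, magEnergy_congr (notMem_tsupport_iff_eventuallyEq.1 hx)]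
  simp [magEnergy]

lemma hasCompactSupport_magEnergy (hc : HasCompactSupport g) :
    HasCompactSupport (magEnergy d A g) :=
  hc.of_isClosed_subset (isClosed_tsupport _) tsupport_magEnergy_subset

lemma continuous_magEnergy (hA : Continuous A) (hg : ContDiff ℝ 1 g) :
    Continuous (magEnergy d A g) := by
  unfold magEnergy
  fun_prop

lemma integrable_magEnergy (hA : Continuous A) (hg : ContDiff ℝ 1 g) (hc : HasCompactSupport g) :
    Integrable (magEnergy d A g) :=
  (continuous_magEnergy hA hg).integrable_of_hasCompactSupport (hasCompactSupport_magEnergy hc)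

lemma magEnergy_smul {χ : EuclideanSpace ℝ (Fin d) → ℝ} {χ' : EuclideanSpace ℝ (Fin d)}
    (hχ : HasGradientAt χ χ' x) (hg : DifferentiableAt ℝ g x) :
    magEnergy d A (fun y => χ y • g y) x =
      χ x ^ 2 * magEnergy d A g x + χ x * fderiv ℝ (fun y => ‖g y‖ ^ 2) x χ'
        + ‖χ'‖ ^ 2 * ‖g x‖ ^ 2 := by
  have hexpand (L : EuclideanSpace ℝ (Fin d) →L[ℝ] ℝ) :
      L χ' = ∑ j, χ' j * L (EuclideanSpace.single j 1) := by
    conv_lhs => rw [← (EuclideanSpace.basisFun (Fin d) ℝ).sum_repr χ', map_sum]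
    simp
  have hterm (j : Fin d) :
      ‖magDeriv A (fun y => χ y • g y) x (EuclideanSpace.single j 1)‖ ^ 2 =
        χ x ^ 2 * ‖magDeriv A g x (EuclideanSpace.single j 1)‖ ^ 2
          + χ x * (χ' j * fderiv ℝ (fun y => ‖g y‖ ^ 2) x (EuclideanSpace.single j 1))
          + χ' j ^ 2 * ‖g x‖ ^ 2 := by
    rw [magDeriv_smul hχ hg, norm_add_sq_real, ← two_mul_inner_magDeriv_self (A := A) hg,
      real_inner_smul_left, real_inner_smul_right, norm_smul, norm_smul, mul_pow, mul_pow,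
      EuclideanSpace.inner_single_right, Real.norm_eq_abs, Real.norm_eq_abs, sq_abs, sq_abs]
    simp only [conj_trivial, one_mul]
    ring
  simp only [magEnergy_eq_sum_magDeriv, hterm, Finset.sum_add_distrib, ← Finset.mul_sum,
    ← Finset.sum_mul, ← EuclideanSpace.real_norm_sq_eq, ← hexpand]

lemma magEnergy_smul_le {χ : EuclideanSpace ℝ (Fin d) → ℝ} {χ' : EuclideanSpace ℝ (Fin d)}
    (hχ : HasGradientAt χ χ' x) (hg : DifferentiableAt ℝ g x) :
    magEnergy d A (fun y => χ y • g y) x ≤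
      2 * (χ x ^ 2 * magEnergy d A g x + ‖χ'‖ ^ 2 * ‖g x‖ ^ 2) := by
  have hparallel (a b : ℂ) : ‖a + b‖ ^ 2 ≤ 2 * (‖a‖ ^ 2 + ‖b‖ ^ 2) :=
    (pow_le_pow_left₀ (norm_nonneg _) (norm_add_le a b) 2).trans add_sq_le
  simp only [magEnergy_eq_sum_magDeriv, magDeriv_smul hχ hg]
  refine (Finset.sum_le_sum fun j _ => hparallel _ _).trans_eq ?_
  simp [← Finset.mul_sum, Finset.sum_add_distrib, mul_pow, ← Finset.sum_mul,
    EuclideanSpace.inner_single_right, EuclideanSpace.real_norm_sq_eq]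

end MagneticEnergy

section GroundState

variable {d : ℕ} {A : EuclideanSpace ℝ (Fin d) → EuclideanSpace ℝ (Fin d)}
  {φ : EuclideanSpace ℝ (Fin d) → ℂ}

lemma norm_sq_norm_rpow_smul_mul_norm_rpow {E F : Type*} [NormedAddCommGroup E]
    [NormedAddCommGroup F] [NormedSpace ℝ F] {x : E} (hx : x ≠ 0) (α : ℝ) (z : F) :
    ‖‖x‖ ^ α • z‖ ^ 2 * ‖x‖ ^ (-(2 * α)) = ‖z‖ ^ 2 := by
  have hr : 0 < ‖x‖ := norm_pos_iff.2 hx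
  have hα : 0 < ‖x‖ ^ α := Real.rpow_pos_of_pos hr α
  rw [norm_smul, mul_pow, Real.norm_of_nonneg hα.le, Real.rpow_neg hr.le, mul_comm 2 α,
    Real.rpow_mul hr.le, Real.rpow_two]
  field_simp

lemma magEnergy_norm_rpow_smul {x : EuclideanSpace ℝ (Fin d)} (hφ : DifferentiableAt ℝ φ x)
    (hx : x ≠ 0) (α : ℝ) :
    magEnergy d A (fun y => ‖y‖ ^ α • φ y) x * ‖x‖ ^ (-(2 * α)) =
      magEnergy d A φ x + α * (‖x‖ ^ (-2 : ℝ) * fderiv ℝ (fun y => ‖φ y‖ ^ 2) x x)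
        + α ^ 2 * (‖x‖ ^ (-2 : ℝ) * ‖φ x‖ ^ 2) := by
  have hr : 0 < ‖x‖ := norm_pos_iff.2 hx
  rw [magEnergy_smul (hasGradientAt_norm_rpow hx α) hφ, map_smul, smul_eq_mul, norm_smul, mul_pow,
    Real.norm_eq_abs, sq_abs, Real.rpow_sub hr, Real.rpow_neg hr.le, Real.rpow_neg hr.le,
    mul_comm 2 α, Real.rpow_mul hr.le, Real.rpow_two, Real.rpow_two]
  field_simp

lemma integral_magEnergy_norm_rpow_smul (hA : Continuous A) (hφ : ContDiff ℝ 1 φ)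
    (hc : HasCompactSupport φ) (h0 : 0 ∉ tsupport φ) (α : ℝ) :
    ∫ x, magEnergy d A (fun y => ‖y‖ ^ α • φ y) x * ‖x‖ ^ (-(2 * α)) =
      (∫ x, magEnergy d A φ x) - α * (d - 2 - α) * ∫ x, ‖φ x‖ ^ 2 / ‖x‖ ^ 2 := by
  set u : EuclideanSpace ℝ (Fin d) → ℝ := fun x => ‖φ x‖ ^ 2
  have hu : ContDiff ℝ 1 u := hφ.norm_sq ℝ
  have huc : HasCompactSupport u := hasCompactSupport_norm_sq hc
  have hu0 : 0 ∉ tsupport u := fun h => h0 (tsupport_norm_sq_subset h)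
  have hmag := integrable_magEnergy hA hφ hc
  have hrad := integrable_norm_rpow_smul_fderiv_apply_self (μ := volume) hu huc hu0 (-2)
  have hhardy :=
    integrable_norm_rpow_smul_of_notMem_tsupport (μ := volume) hu.continuous huc hu0 (-2)
  have hpointwise (x : EuclideanSpace ℝ (Fin d)) :
      magEnergy d A (fun y => ‖y‖ ^ α • φ y) x * ‖x‖ ^ (-(2 * α)) =
        magEnergy d A φ x + α * (‖x‖ ^ (-2 : ℝ) * fderiv ℝ u x x)
          + α ^ 2 * (‖x‖ ^ (-2 : ℝ) * u x) := by
    rcases eq_or_ne x 0 with rfl | hx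
    · have hvanish := notMem_tsupport_iff_eventuallyEq.1 h0
      have hvanish' : (fun y => ‖y‖ ^ α • φ y) =ᶠ[𝓝 0] φ := by
        filter_upwards [hvanish] with y hy
        simp [hy]
      rw [magEnergy_congr hvanish', magEnergy_congr hvanish]
      simp [magEnergy, u, hvanish.eq_of_nhds]
    · exact magEnergy_norm_rpow_smul (hφ.differentiable one_ne_zero x) hx α
  have heuler : ∫ x, ‖x‖ ^ (-2 : ℝ) * fderiv ℝ u x x = -((d - 2) * ∫ x, ‖x‖ ^ (-2 : ℝ) * u x) := by
    simpa [← sub_eq_add_neg] using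
      integral_norm_rpow_smul_fderiv_apply_self (μ := volume) hu huc hu0 (-2)
  have hweight (x : EuclideanSpace ℝ (Fin d)) : ‖φ x‖ ^ 2 / ‖x‖ ^ 2 = ‖x‖ ^ (-2 : ℝ) * u x := by
    rw [Real.rpow_neg (norm_nonneg x), Real.rpow_two, div_eq_inv_mul]
  simp only [smul_eq_mul] at hrad hhardy
  simp only [hpointwise, hweight]
  rw [integral_add (hmag.fun_add (hrad.const_mul α)) (hhardy.const_mul _),
    integral_add hmag (hrad.const_mul α), integral_const_mul, integral_const_mul, heuler]
  ring

end GroundState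

section RayleighQuotient

variable {d : ℕ} {A : EuclideanSpace ℝ (Fin d) → EuclideanSpace ℝ (Fin d)} {R : ℝ}

lemma muB_mul_setIntegral_le {g : EuclideanSpace ℝ (Fin d) → ℂ} (hg : ContDiff ℝ (⊤ : ℕ∞) g) :
    muB d A R * ∫ x in Metric.ball 0 R, ‖g x‖ ^ 2 * ‖x‖ ^ (-((d : ℝ) - 2)) ≤
      ∫ x in Metric.ball 0 R, magEnergy d A g x * ‖x‖ ^ (-((d : ℝ) - 2)) := by
  have henergy (f : EuclideanSpace ℝ (Fin d) → ℂ) :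
      0 ≤ ∫ x in Metric.ball 0 R, magEnergy d A f x * ‖x‖ ^ (-((d : ℝ) - 2)) :=
    integral_nonneg fun x => mul_nonneg magEnergy_nonneg (by positivity)
  have hmass (f : EuclideanSpace ℝ (Fin d) → ℂ) :
      0 ≤ ∫ x in Metric.ball 0 R, ‖f x‖ ^ 2 * ‖x‖ ^ (-((d : ℝ) - 2)) :=
    integral_nonneg fun x => by positivity
  rcases (hmass g).eq_or_lt with hzero | hpos
  · rw [← hzero, mul_zero]
    exact henergy g
  rw [← le_div_iff₀ hpos]
  refine csInf_le ⟨0, ?_⟩ ⟨g, hg, ?_, rfl⟩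
  · rintro _ ⟨f, -, -, rfl⟩
    exact div_nonneg (henergy f) (hmass f)
  · by_contra! hvanish
    refine hpos.ne' (setIntegral_eq_zero_of_forall_eq_zero fun x hx => ?_)
    simp [hvanish x hx]

lemma muB_mul_setIntegral_le_of_notMem_tsupport (hA : Continuous A)
    {φ : EuclideanSpace ℝ (Fin d) → ℂ} (hφ : ContDiff ℝ (⊤ : ℕ∞) φ) (hc : HasCompactSupport φ)
    (h0 : 0 ∉ tsupport φ) :
    muB d A R * ∫ x in Metric.ball 0 R, ‖φ x‖ ^ 2 ≤
      (∫ x, magEnergy d A φ x) - ((d - 2 : ℝ) / 2) ^ 2 * ∫ x, ‖φ x‖ ^ 2 / ‖x‖ ^ 2 := by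
  obtain ⟨α, hα⟩ : ∃ α : ℝ, d - 2 = 2 * α := ⟨(d - 2) / 2, by ring⟩
  let g : EuclideanSpace ℝ (Fin d) → ℂ := fun y => ‖y‖ ^ α • φ y
  have hg : ContDiff ℝ (⊤ : ℕ∞) g := contDiff_norm_rpow_smul hφ h0 α
  have hgc : HasCompactSupport g := hc.smul_left (f := fun y => ‖y‖ ^ α)
  have hg0 : 0 ∉ tsupport (magEnergy d A g) := fun h =>
    h0 (tsupport_smul_subset_right _ φ (tsupport_magEnergy_subset h))
  have hmass (x : EuclideanSpace ℝ (Fin d)) : ‖g x‖ ^ 2 * ‖x‖ ^ (-(2 * α)) = ‖φ x‖ ^ 2 := by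
    rcases eq_or_ne x 0 with rfl | hx
    · simp [g, image_eq_zero_of_notMem_tsupport h0]
    · exact norm_sq_norm_rpow_smul_mul_norm_rpow hx α (φ x)
  have hint : Integrable fun x => magEnergy d A g x * ‖x‖ ^ (-(2 * α)) :=
    (integrable_norm_rpow_smul_of_notMem_tsupport
      (continuous_magEnergy hA (hg.of_le (mod_cast le_top))) (hasCompactSupport_magEnergy hgc)
      hg0 (-(2 * α))).congr (Eventually.of_forall fun x => mul_comm _ _)
  have hrayleigh := muB_mul_setIntegral_le (A := A) (R := R) hg
  simp only [hα, hmass] at hrayleigh ⊢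
  calc muB d A R * ∫ x in Metric.ball 0 R, ‖φ x‖ ^ 2
      ≤ ∫ x in Metric.ball 0 R, magEnergy d A g x * ‖x‖ ^ (-(2 * α)) := hrayleigh
    _ ≤ ∫ x, magEnergy d A g x * ‖x‖ ^ (-(2 * α)) :=
        setIntegral_le_integral hint
          (Eventually.of_forall fun x => mul_nonneg magEnergy_nonneg (by positivity))
    _ = (∫ x, magEnergy d A φ x) - α * (d - 2 - α) * ∫ x, ‖φ x‖ ^ 2 / ‖x‖ ^ 2 :=
        integral_magEnergy_norm_rpow_smul hA (hφ.of_le (mod_cast le_top)) hc h0 α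
    _ = (∫ x, magEnergy d A φ x) - (2 * α / 2) ^ 2 * ∫ x, ‖φ x‖ ^ 2 / ‖x‖ ^ 2 := by
        rw [hα]
        ring

end RayleighQuotient

section OriginCutoff

variable {E : Type*} [NormedAddCommGroup E] [InnerProductSpace ℝ E]

/-- A smooth cutoff away from the origin: it vanishes for `‖t • x‖ ≤ 1` and equals one for
`2 ≤ ‖t • x‖`, so that it tends to one off the origin as `t → ∞`. -/
noncomputable def originCutoff (t : ℝ) (x : E) : ℝ :=
  1 - (⟨1, 2, one_pos, one_lt_two⟩ : ContDiffBump (0 : E)) (t • x)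

lemma contDiff_originCutoff {n : ℕ∞} (t : ℝ) :
    ContDiff ℝ n (originCutoff (E := E) t) :=
  contDiff_const.sub (ContDiffBump.contDiff _ |>.comp (contDiff_const_smul t))

lemma originCutoff_sq_le_one (t : ℝ) (x : E) : originCutoff t x ^ 2 ≤ 1 :=
  pow_le_one₀ (sub_nonneg.2 (ContDiffBump.le_one _)) (sub_le_self _ (ContDiffBump.nonneg _))

lemma zero_notMem_tsupport_originCutoff (t : ℝ) : 0 ∉ tsupport (originCutoff (E := E) t) := by
  let f : ContDiffBump (0 : E) := ⟨1, 2, one_pos, one_lt_two⟩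
  rw [notMem_tsupport_iff_eventuallyEq]
  have hscale : Tendsto (fun y : E => t • y) (𝓝 0) (𝓝 0) :=
    (continuous_const_smul t).tendsto' 0 0 (smul_zero t)
  filter_upwards [hscale.eventually f.eventuallyEq_one] with y hy
  exact sub_eq_zero.2 hy.symm

lemma eventually_originCutoff_eventuallyEq_one {x : E} (hx : x ≠ 0) :
    ∀ᶠ t in atTop, originCutoff t =ᶠ[𝓝 x] 1 := by
  have hlim : Tendsto (fun t : ℝ => t * ‖x‖) atTop atTop :=
    tendsto_id.atTop_mul_const (norm_pos_iff.2 hx)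
  filter_upwards [hlim.eventually_gt_atTop 2, eventually_ge_atTop 0] with t ht ht0
  have hnear : ∀ᶠ y : E in 𝓝 x, 2 < t * ‖y‖ :=
    (continuous_const.mul continuous_norm).continuousAt.eventually (lt_mem_nhds ht)
  filter_upwards [hnear] with y hy
  rw [originCutoff, ContDiffBump.zero_of_le_dist]
  · simp
  · rw [dist_zero_right, norm_smul, Real.norm_of_nonneg ht0]
    exact hy.le

lemma exists_norm_mul_norm_gradient_originCutoff_le (E : Type*) [NormedAddCommGroup E]
    [InnerProductSpace ℝ E] [FiniteDimensional ℝ E] :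
    ∃ C, ∀ (t : ℝ) (x : E), ‖x‖ * ‖∇ (originCutoff t) x‖ ≤ C := by
  let f : ContDiffBump (0 : E) := ⟨1, 2, one_pos, one_lt_two⟩
  have hcont : Continuous fun y : E => ‖y‖ • fderiv ℝ f y :=
    continuous_norm.smul (f.contDiff.continuous_fderiv one_ne_zero)
  have hsupp : HasCompactSupport fun y : E => ‖y‖ • fderiv ℝ f y :=
    (f.hasCompactSupport.fderiv ℝ).smul_left (f := fun y : E => ‖y‖)
  obtain ⟨C, hC⟩ := hsupp.exists_bound_of_continuous hcont
  refine ⟨C, fun t x => ?_⟩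
  have hfderiv : fderiv ℝ (originCutoff t) x = -(t • fderiv ℝ f (t • x)) := by
    unfold originCutoff
    rw [fderiv_const_sub, fderiv_comp_smul]
  calc ‖x‖ * ‖∇ (originCutoff t) x‖ = ‖‖t • x‖ • fderiv ℝ f (t • x)‖ := by
        rw [gradient, LinearIsometryEquiv.norm_map, hfderiv, norm_neg, norm_smul, norm_smul,
          norm_norm, norm_smul]
        ring
    _ ≤ C := hC _

lemma tendsto_integral_originCutoff_sq_mul [MeasurableSpace E] [BorelSpace E] {μ : Measure E}
    [NullSingletonClass μ] {f : E → ℝ} (hf : Integrable f μ) :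
    Tendsto (fun t => ∫ x, originCutoff t x ^ 2 * f x ∂μ) atTop (𝓝 (∫ x, f x ∂μ)) := by
  refine tendsto_integral_filter_of_dominated_convergence (fun x => ‖f x‖)
    (Eventually.of_forall fun t => ?_) (Eventually.of_forall fun t => ?_) hf.norm ?_
  · exact ((contDiff_originCutoff (n := 0) t).continuous.pow 2).aestronglyMeasurable.mul hf.1
  · refine Eventually.of_forall fun x => ?_
    rw [norm_mul, Real.norm_of_nonneg (sq_nonneg _)]
    exact mul_le_of_le_one_left (norm_nonneg _) (originCutoff_sq_le_one t x)
  · filter_upwards [Measure.ae_ne μ 0] with x hx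
    refine tendsto_nhds_of_eventually_eq ?_
    filter_upwards [eventually_originCutoff_eventuallyEq_one hx] with t ht
    simp [ht.eq_of_nhds]

end OriginCutoff

section HardyInequality

variable {d : ℕ} {A : EuclideanSpace ℝ (Fin d) → EuclideanSpace ℝ (Fin d)}
  {ψ : EuclideanSpace ℝ (Fin d) → ℂ}

lemma integrable_norm_sq_div_norm_sq {E F : Type*} [NormedAddCommGroup E] [NormedSpace ℝ E]
    [FiniteDimensional ℝ E] [MeasurableSpace E] [BorelSpace E] {μ : Measure E} [μ.IsAddHaarMeasure]
    [NormedAddCommGroup F] (hE : 3 ≤ finrank ℝ E) {f : E → F} (hf : Continuous f)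
    (hc : HasCompactSupport f) : Integrable (fun x => ‖f x‖ ^ 2 / ‖x‖ ^ 2) μ := by
  have hexponent : -(finrank ℝ E : ℝ) < -2 := neg_lt_neg (by exact_mod_cast hE)
  have hint : Integrable (fun x => ‖x‖ ^ (-2 : ℝ) • ‖f x‖ ^ 2) μ :=
    integrable_norm_rpow_smul (by lia) hexponent (hf.norm.pow 2)
      (hasCompactSupport_norm_sq hc)
  refine hint.congr (Eventually.of_forall fun x => ?_)
  simp only [Real.rpow_neg (norm_nonneg x), Real.rpow_two, smul_eq_mul, div_eq_inv_mul]

lemma exists_magEnergy_originCutoff_smul_le (hψ : Differentiable ℝ ψ) :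
    ∃ C, ∀ (t : ℝ) {x : EuclideanSpace ℝ (Fin d)}, x ≠ 0 →
      magEnergy d A (fun y => originCutoff t y • ψ y) x ≤
        2 * (magEnergy d A ψ x + C * (‖ψ x‖ ^ 2 / ‖x‖ ^ 2)) := by
  obtain ⟨C, hC⟩ := exists_norm_mul_norm_gradient_originCutoff_le (EuclideanSpace ℝ (Fin d))
  refine ⟨C ^ 2, fun t x hx => ?_⟩
  have hgradient : ‖∇ (originCutoff t) x‖ ≤ C / ‖x‖ :=
    (le_div_iff₀' (norm_pos_iff.2 hx)).2 (hC t x)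
  calc magEnergy d A (fun y => originCutoff t y • ψ y) x
      ≤ 2 * (originCutoff t x ^ 2 * magEnergy d A ψ x
          + ‖∇ (originCutoff t) x‖ ^ 2 * ‖ψ x‖ ^ 2) :=
        magEnergy_smul_le
          ((contDiff_originCutoff (n := 1) t).differentiable one_ne_zero x).hasGradientAt (hψ x)
    _ ≤ 2 * (1 * magEnergy d A ψ x + (C / ‖x‖) ^ 2 * ‖ψ x‖ ^ 2) := by
        gcongr
        · exact magEnergy_nonneg
        · exact originCutoff_sq_le_one t x
    _ = 2 * (magEnergy d A ψ x + C ^ 2 * (‖ψ x‖ ^ 2 / ‖x‖ ^ 2)) := by ring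

lemma tendsto_integral_magEnergy_originCutoff_smul (hd : 3 ≤ d) (hA : Continuous A)
    (hψ : ContDiff ℝ 1 ψ) (hc : HasCompactSupport ψ) :
    Tendsto (fun t => ∫ x, magEnergy d A (fun y => originCutoff t y • ψ y) x) atTop
      (𝓝 (∫ x, magEnergy d A ψ x)) := by
  have : Nonempty (Fin d) := ⟨⟨0, by lia⟩⟩
  obtain ⟨C, hC⟩ :=
    exists_magEnergy_originCutoff_smul_le (A := A) (hψ.differentiable one_ne_zero)
  have hhardy : Integrable fun x => ‖ψ x‖ ^ 2 / ‖x‖ ^ 2 :=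
    integrable_norm_sq_div_norm_sq (by simpa using hd) hψ.continuous hc
  refine tendsto_integral_filter_of_dominated_convergence
    (fun x => 2 * (magEnergy d A ψ x + C * (‖ψ x‖ ^ 2 / ‖x‖ ^ 2)))
    (Eventually.of_forall fun t => ?_) (Eventually.of_forall fun t => ?_)
    (((integrable_magEnergy hA hψ hc).add (hhardy.const_mul _)).const_mul 2) ?_
  · exact (continuous_magEnergy hA ((contDiff_originCutoff t).smul hψ)).aestronglyMeasurable
  · filter_upwards [Measure.ae_ne volume 0] with x hx
    rw [Real.norm_of_nonneg magEnergy_nonneg]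
    exact hC t hx
  · filter_upwards [Measure.ae_ne volume 0] with x hx
    refine tendsto_nhds_of_eventually_eq ?_
    filter_upwards [eventually_originCutoff_eventuallyEq_one hx] with t ht
    refine magEnergy_congr ?_
    filter_upwards [ht] with y hy
    rw [hy, Pi.one_apply, one_smul]

lemma muB_mul_setIntegral_le_of_three_le (hd : 3 ≤ d) (hA : Continuous A) (R : ℝ)
    (hψ : ContDiff ℝ (⊤ : ℕ∞) ψ) (hc : HasCompactSupport ψ) :
    muB d A R * ∫ x in Metric.ball 0 R, ‖ψ x‖ ^ 2 ≤
      (∫ x, magEnergy d A ψ x) - ((d - 2 : ℝ) / 2) ^ 2 * ∫ x, ‖ψ x‖ ^ 2 / ‖x‖ ^ 2 := by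
  have : Nonempty (Fin d) := ⟨⟨0, by lia⟩⟩
  have hmass : Integrable fun x => ‖ψ x‖ ^ 2 :=
    (hψ.continuous.norm.pow 2).integrable_of_hasCompactSupport
      (hasCompactSupport_norm_sq hc)
  have hhardy : Integrable fun x => ‖ψ x‖ ^ 2 / ‖x‖ ^ 2 :=
    integrable_norm_sq_div_norm_sq (by simpa using hd) hψ.continuous hc
  have hsmooth (t : ℝ) : ContDiff ℝ (⊤ : ℕ∞) fun x => originCutoff t x • ψ x :=
    (contDiff_originCutoff t).smul hψ
  have hcompact (t : ℝ) : HasCompactSupport fun x => originCutoff t x • ψ x :=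
    hc.smul_left (f := originCutoff t)
  have hzero (t : ℝ) : 0 ∉ tsupport fun x => originCutoff t x • ψ x := fun h =>
    zero_notMem_tsupport_originCutoff t (tsupport_smul_subset_left _ ψ h)
  have hcutoff (t : ℝ) := muB_mul_setIntegral_le_of_notMem_tsupport (R := R) hA
    (hsmooth t) (hcompact t) (hzero t)
  simp only [norm_smul, mul_pow, Real.norm_eq_abs, sq_abs, mul_div_assoc] at hcutoff
  exact le_of_tendsto_of_tendsto'
    ((tendsto_integral_originCutoff_sq_mul hmass.restrict).const_mul _)
    ((tendsto_integral_magEnergy_originCutoff_smul hd hA (hψ.of_le (mod_cast le_top)) hc).sub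
      ((tendsto_integral_originCutoff_sq_mul hhardy).const_mul _)) hcutoff

theorem stmt10_general (hd : 2 ≤ d) (hA : Continuous A) (R : ℝ) (hψ : ContDiff ℝ (⊤ : ℕ∞) ψ)
    (hsupp : HasCompactSupport ψ) :
    (∫ x, magEnergy d A ψ x) - ((d - 2 : ℝ) / 2) ^ 2 * (∫ x, ‖ψ x‖ ^ 2 / ‖x‖ ^ 2) ≥
      muB d A R * ∫ x in Metric.ball (0 : EuclideanSpace ℝ (Fin d)) R, ‖ψ x‖ ^ 2 := by
  rcases hd.eq_or_lt with rfl | hd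
  · have hrayleigh := muB_mul_setIntegral_le (A := A) (R := R) hψ
    simp only [Nat.cast_ofNat, sub_self, neg_zero, Real.rpow_zero, mul_one] at hrayleigh
    have hmono := setIntegral_le_integral (s := Metric.ball 0 R)
      (integrable_magEnergy hA (hψ.of_le (mod_cast le_top)) hsupp)
      (Eventually.of_forall fun _ => magEnergy_nonneg)
    simpa using hrayleigh.trans hmono
  · exact muB_mul_setIntegral_le_of_three_le hd hA R hψ hsupp

end HardyInequality

theorem stmt10 (d : ℕ) (hd : 2 ≤ d)
    (A : EuclideanSpace ℝ (Fin d) → EuclideanSpace ℝ (Fin d)) (hA : ContDiff ℝ (⊤ : ℕ∞) A)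
    (R : ℝ) (hR : 0 < R)
    (ψ : EuclideanSpace ℝ (Fin d) → ℂ) (hψ : ContDiff ℝ (⊤ : ℕ∞) ψ) (hsupp : HasCompactSupport ψ) :
    (∫ x, magEnergy d A ψ x) - ((d - 2 : ℝ)/2)^2 * (∫ x, ‖ψ x‖^2 / ‖x‖^2)
    ≥ muB d A R * ∫ x in Metric.ball (0 : EuclideanSpace ℝ (Fin d)) R, ‖ψ x‖^2 :=
  stmt10_general hd hA.continuous R hψ hsupp
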